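/- Fix n ≥ 0 and d ≥ 1, and embed ℂP^n into ℂP^{n+1} as the hyperplane {x_{n+1} = 0}. Then the induced inclusion SP^d(ℂP^n) ↪ SP^d(ℂP^{n+1}) induces isomorphisms π_k(SP^d(ℂP^n)) ≅ π_k(SP^d(ℂP^{n+1})) for all 0 ≤ k ≤ 2n. -/

import Mathlib

open scoped Topology

/-- Complex projective `n`-space `ℂP^n`: the quotient of `ℂ^{n+1} ∖ {0}` by the scalar
action of `ℂ*`, with the quotient topology. -/
def CP (n : ℕ) : Type := Projectivization ℂ (Fin (n + 1) → ℂ)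

instance (n : ℕ) : TopologicalSpace (CP n) :=
  inferInstanceAs (TopologicalSpace (Quotient (projectivizationSetoid ℂ (Fin (n + 1) → ℂ))))

/-- The setoid on `X^d` identifying tuples up to the permutation action of the symmetric
group on `d` letters. -/
def SPSetoid (X : Type) (d : ℕ) : Setoid (Fin d → X) where
  r f g := ∃ σ : Equiv.Perm (Fin d), f ∘ σ = g
  iseqv := by
    refine ⟨fun f => ⟨Equiv.refl _, rfl⟩, ?_, ?_⟩
    · rintro f g ⟨σ, rfl⟩
      exact ⟨σ.symm, by funext i; simp⟩
    · rintro f g h ⟨σ, rfl⟩ ⟨τ, rfl⟩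
      exact ⟨τ.trans σ, rfl⟩

/-- The `d`-th symmetric product `SP^d(X)`: the quotient of `X^d` by the permutation action
of the symmetric group on `d` letters, with the quotient topology. -/
def SP (X : Type) [TopologicalSpace X] (d : ℕ) : Type := Quotient (SPSetoid X d)

instance (X : Type) [TopologicalSpace X] (d : ℕ) : TopologicalSpace (SP X d) :=
  inferInstanceAs (TopologicalSpace (Quotient (SPSetoid X d)))

/-- The point `p₀ = [0 : ⋯ : 0 : 1] ∈ ℂP^{n+1}`. -/
noncomputable def lastPoint (n : ℕ) : CP (n + 1) :=
  Projectivization.mk ℂ (Pi.single (Fin.last (n + 1)) (1 : ℂ))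
    (fun h => one_ne_zero (α := ℂ) (by
      have := congrFun h (Fin.last (n + 1))
      rwa [Pi.single_eq_same] at this))

/-- An unordered `d`-tuple `s ∈ SP^d(X)` avoids `a : X` if none of its entries equals `a`. -/
def SPAvoids {X : Type} [TopologicalSpace X] {d : ℕ} (s : SP X d) (a : X) : Prop :=
  ∀ f : Fin d → X, Quotient.mk (SPSetoid X d) f = s → ∀ i, f i ≠ a

/-- The map induced on homotopy groups (based homotopy classes of maps from the `N`-cube,
boundary to the basepoint) by a continuous map, given by postcomposition. -/
noncomputable def HomotopyGroup.inducedMap (N : Type) {X Y : Type}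
    [TopologicalSpace X] [TopologicalSpace Y] (f : C(X, Y)) (x : X) :
    HomotopyGroup N X x → HomotopyGroup N Y (f x) :=
  Quotient.map
    (fun p => ⟨f.comp p.1, fun y hy => by
      simp only [ContinuousMap.comp_apply]
      rw [p.2 y hy]⟩)
    (fun p q h => h.map fun H => H.compContinuousMap f)

/-!
The affine chart of `ℂP^{n+1}` centred at `p₀ = [0 : ⋯ : 0 : 1]` is the orbit of `p₀` under the
translations of `ℂ^{n+1}`, which act on all of `ℂP^{n+1}` and hence on `SP^d(ℂP^{n+1})`. A map `g`
from a compact space of dimension less than `2n + 2` into the symmetric product can be pushed off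
the cycles containing `p₀`, by induction on the largest multiplicity `m` of `p₀` in its values:
translate `g x` by a small vector `-u x`. If `p₀` still had multiplicity `m`, then all the entries
of `g x` near `p₀` would equal `u x +ᵥ p₀`, so `u x` would be the average of their affine
coordinates, which is a continuous function of `x`; for reasons of dimension `u` can be chosen to
avoid it. On the other hand, the complement of `p₀` strongly deformation retracts onto the
hyperplane `ℂP^n`, and applying this to every entry deforms the cycles avoiding `p₀` into
`SP^d(ℂP^n)`. Representatives of homotopy classes are compressed in this way in dimension
`k < 2n + 2`, homotopies between them in dimension `k + 1 < 2n + 2`.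
-/

section SymmetricProducts

open Set Filter

theorem isOpenQuotientMap_quotientMk {T Γ : Type*} [TopologicalSpace T] {s : Setoid T}
    {e : Γ → T → T} (he : ∀ γ, Continuous (e γ)) (hs : ∀ x y, s x y ↔ ∃ γ, e γ x = y) :
    IsOpenQuotientMap (Quotient.mk s) where
  surjective := Quotient.mk_surjective
  continuous := continuous_quot_mk
  isOpenMap U hU := by
    have hpre : Quotient.mk s ⁻¹' (Quotient.mk s '' U) = ⋃ γ, e γ ⁻¹' U := by
      ext x
      simp only [mem_preimage, mem_image, mem_iUnion]
      constructor
      · rintro ⟨y, hy, hyx⟩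
        obtain ⟨γ, rfl⟩ := (hs x y).1 (Quotient.exact hyx.symm)
        exact ⟨γ, hy⟩
      · rintro ⟨γ, hγ⟩
        exact ⟨_, hγ, (Quotient.sound ((hs _ _).2 ⟨γ, rfl⟩)).symm⟩
    change IsOpen (Quotient.mk s ⁻¹' (Quotient.mk s '' U))
    rw [hpre]
    exact isOpen_iUnion fun γ => hU.preimage (he γ)

namespace SP

variable {P : Type*} {X Y Z : Type} [TopologicalSpace P] [TopologicalSpace X] [TopologicalSpace Y]
  [TopologicalSpace Z] {d : ℕ}

/-- The unordered tuple with entries `f i`. -/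
def mk (f : Fin d → X) : SP X d := Quotient.mk (SPSetoid X d) f

theorem mk_surjective : Function.Surjective (mk : (Fin d → X) → SP X d) :=
  Quotient.mk_surjective

theorem isOpenQuotientMap_mk : IsOpenQuotientMap (mk : (Fin d → X) → SP X d) :=
  isOpenQuotientMap_quotientMk (e := fun (σ : Equiv.Perm (Fin d)) f => f ∘ σ)
    (fun σ => continuous_pi fun i => continuous_apply (σ i)) fun _ _ => Iff.rfl

/-- The map of symmetric products applying `h` to every entry. -/
def map (h : X → Y) : SP X d → SP Y d :=
  Quotient.map (h ∘ ·) (by rintro f _ ⟨σ, rfl⟩; exact ⟨σ, rfl⟩)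

theorem map_map (h : Y → Z) (h' : X → Y) (s : SP X d) : map h (map h' s) = map (h ∘ h') s := by
  obtain ⟨f, rfl⟩ := mk_surjective s
  rfl

theorem map_id (s : SP X d) : map id s = s := by
  obtain ⟨f, rfl⟩ := mk_surjective s
  rfl

theorem continuousAt_map {h : X → Y} {f : Fin d → X} (hh : ∀ i, ContinuousAt h (f i)) :
    ContinuousAt (map h) (mk f) := by
  refine (isOpenQuotientMap_mk.continuousAt_comp_iff (x := f)).1 ?_
  exact isOpenQuotientMap_mk.continuous.continuousAt.comp <|
    continuousAt_pi.2 fun i =>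
      ContinuousAt.comp (g := h) (f := fun f : Fin d → X => f i) (hh i)
        (continuous_apply i).continuousAt

theorem continuousAt_map_prod {h : P → X → Y} {a : P} {f : Fin d → X}
    (hh : ∀ i, ContinuousAt (Function.uncurry h) (a, f i)) :
    ContinuousAt (fun b : P × SP X d => map (h b.1) b.2) (a, mk f) := by
  have hq : IsOpenQuotientMap (Prod.map id mk : P × (Fin d → X) → P × SP X d) :=
    IsOpenQuotientMap.id.prodMap isOpenQuotientMap_mk
  refine (hq.continuousAt_comp_iff (x := (a, f))).1 ?_
  have hentry (i : Fin d) : ContinuousAt (fun b : P × (Fin d → X) => h b.1 (b.2 i)) (a, f) :=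
    ContinuousAt.comp (g := Function.uncurry h)
      (f := fun b : P × (Fin d → X) => (b.1, b.2 i)) (x := (a, f)) (hh i) (by fun_prop)
  exact isOpenQuotientMap_mk.continuous.continuousAt.comp (continuousAt_pi.2 hentry)

instance {G : Type*} [AddMonoid G] [AddAction G X] : AddAction G (SP X d) where
  vadd v := map (v +ᵥ ·)
  zero_vadd s := by
    change map (fun p => (0 : G) +ᵥ p) s = s
    simp only [zero_vadd]
    exact map_id s
  add_vadd v w s := by
    change map (fun p => (v + w) +ᵥ p) s = map (v +ᵥ ·) (map (w +ᵥ ·) s)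
    simp only [add_vadd, map_map]
    rfl

@[simp] theorem vadd_mk {G : Type*} [AddMonoid G] [AddAction G X] (v : G) (f : Fin d → X) :
    v +ᵥ mk f = mk fun i => v +ᵥ f i := rfl

instance {G : Type*} [TopologicalSpace G] [AddMonoid G] [AddAction G X] [ContinuousVAdd G X] :
    ContinuousVAdd G (SP X d) where
  continuous_vadd := by
    refine continuous_iff_continuousAt.2 ?_
    rintro ⟨v, s⟩
    obtain ⟨f, rfl⟩ := mk_surjective s
    exact continuousAt_map_prod (h := fun (v : G) (p : X) => v +ᵥ p) fun i =>
      continuous_vadd.continuousAt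

/-- The sum of the values of `φ` at the entries of an unordered tuple. -/
def sum {M : Type*} [AddCommMonoid M] (φ : X → M) : SP X d → M :=
  Quotient.lift (fun f => ∑ i, φ (f i)) (by
    rintro f _ ⟨σ, rfl⟩
    exact (Equiv.sum_comp σ fun i => φ (f i)).symm)

@[simp] theorem sum_mk {M : Type*} [AddCommMonoid M] (φ : X → M) (f : Fin d → X) :
    sum φ (mk f) = ∑ i, φ (f i) := rfl

theorem continuous_sum {M : Type*} [AddCommMonoid M] [TopologicalSpace M] [ContinuousAdd M]
    {φ : X → M} (hφ : Continuous φ) : Continuous (sum φ : SP X d → M) :=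
  isOpenQuotientMap_mk.continuous_comp_iff.1 <|
    show Continuous fun f : Fin d → X => ∑ i, φ (f i) by fun_prop

theorem avoids_mk {f : Fin d → X} {a : X} : SPAvoids (mk f) a ↔ ∀ i, f i ≠ a := by
  refine ⟨fun h => h f rfl, fun h g hg i => ?_⟩
  obtain ⟨σ, rfl⟩ := Quotient.exact hg
  simpa using h (σ.symm i)

/-- The number of entries, with multiplicity, of an unordered tuple that lie in `A`; for
`A = {a}` this is the multiplicity of the point `a` in a `0`-cycle. -/
noncomputable def count (A : Set X) : SP X d → ℕ := sum (A.indicator fun _ => 1)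

theorem count_mk (A : Set X) (f : Fin d → X) :
    count A (mk f) = ∑ i, A.indicator (fun _ => 1) (f i) := rfl

theorem count_le (A : Set X) (s : SP X d) : count A s ≤ d := by
  obtain ⟨f, rfl⟩ := mk_surjective s
  calc count A (mk f) = ∑ i, A.indicator (fun _ => 1) (f i) := count_mk A f
    _ ≤ ∑ _i : Fin d, 1 :=
        Finset.sum_le_sum fun i _ => indicator_le_self' (fun _ _ => zero_le_one) (f i)
    _ = d := by simp

theorem count_mono {A B : Set X} (hAB : A ⊆ B) (s : SP X d) : count A s ≤ count B s := by
  obtain ⟨f, rfl⟩ := mk_surjective s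
  simp only [count_mk]
  exact Finset.sum_le_sum fun i _ =>
    indicator_le_indicator_of_subset hAB (fun _ => Nat.zero_le _) (f i)

theorem count_eq_zero_iff {A : Set X} {f : Fin d → X} : count A (mk f) = 0 ↔ ∀ i, f i ∉ A := by
  simp [count_mk, Finset.sum_eq_zero_iff]

theorem count_singleton_eq_zero_iff {a : X} {s : SP X d} : count {a} s = 0 ↔ SPAvoids s a := by
  obtain ⟨f, rfl⟩ := mk_surjective s
  simp only [count_eq_zero_iff, avoids_mk, mem_singleton_iff]

theorem count_singleton_vadd {G : Type*} [AddGroup G] [AddAction G X] (v : G) (a : X)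
    (s : SP X d) : count {v +ᵥ a} (v +ᵥ s) = count {a} s := by
  obtain ⟨f, rfl⟩ := mk_surjective s
  classical
  simp only [vadd_mk, count_mk, indicator_apply, mem_singleton_iff, vadd_left_cancel_iff]

theorem sum_eq_zero_of_count_eq_zero {M : Type*} [AddCommMonoid M] {A : Set X} {φ : X → M}
    (hφ : ∀ p ∉ A, φ p = 0) {s : SP X d} (hs : count A s = 0) : sum φ s = 0 := by
  obtain ⟨f, rfl⟩ := mk_surjective s
  exact Finset.sum_eq_zero fun i _ => hφ _ (count_eq_zero_iff.1 hs i)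

theorem sum_eq_count_smul {M : Type*} [AddCommMonoid M] {A : Set X} {φ : X → M}
    (hφ : ∀ p ∉ A, φ p = 0) {q : X} (hq : q ∈ A) {s : SP X d} (hs : count A s ≤ count {q} s) :
    sum φ s = count {q} s • φ q := by
  obtain ⟨f, rfl⟩ := mk_surjective s
  have hle (p : X) : indicator {q} (fun _ => 1) p ≤ A.indicator (fun _ => 1) p :=
    indicator_le_indicator_of_subset (singleton_subset_iff.2 hq) (fun _ => Nat.zero_le _) p
  have heq : ∀ i ∈ Finset.univ, indicator {q} (fun _ => 1) (f i) = A.indicator (fun _ => 1) (f i) :=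
    (Finset.sum_eq_sum_iff_of_le fun i _ => hle (f i)).1
      ((count_mono (singleton_subset_iff.2 hq) (mk f)).antisymm hs)
  rw [sum_mk, count_mk, Finset.sum_smul]
  refine Finset.sum_congr rfl fun i hi => ?_
  by_cases hiq : f i = q
  · rw [hiq, indicator_of_mem (mem_singleton q), one_smul]
  · have hiA : f i ∉ A := fun hiA => by simpa [hiA, hiq] using heq i hi
    rw [hφ _ hiA, indicator_of_notMem (mt mem_singleton_iff.1 hiq), zero_smul]

theorem le_sum_of_count_ne_zero {φ : X → ℝ} (hφ : 0 ≤ φ) {q : X} {s : SP X d}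
    (hs : count {q} s ≠ 0) : φ q ≤ sum φ s := by
  obtain ⟨f, rfl⟩ := mk_surjective s
  obtain ⟨i, hi⟩ : ∃ i, f i = q := by
    simpa only [ne_eq, count_eq_zero_iff, mem_singleton_iff, not_forall, not_not] using hs
  rw [← hi]
  exact Finset.single_le_sum (f := fun i => φ (f i)) (fun _ _ => hφ _) (Finset.mem_univ i)

theorem eventually_count_le_count_singleton [T2Space X] (a : X) (s : SP X d) :
    ∀ᶠ q : SP X d × Set X in 𝓝 s ×ˢ (𝓝 a).smallSets, count q.2 q.1 ≤ count {a} s := by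
  obtain ⟨f, rfl⟩ := mk_surjective s
  have hfar (i : Fin d) (hi : f i ≠ a) :
      ∀ᶠ q : (Fin d → X) × Set X in 𝓝 f ×ˢ (𝓝 a).smallSets, q.1 i ∉ q.2 := by
    obtain ⟨V, hV, W, hW, hVW⟩ := Filter.disjoint_iff.1 (disjoint_nhds_nhds.2 hi)
    filter_upwards [prod_mem_prod ((continuous_apply i).continuousAt.preimage_mem_nhds hV)
      (eventually_smallSets_subset.2 hW)] with q hq hmem
    exact disjoint_left.1 hVW hq.1 (hq.2 hmem)
  have hcount : ∀ᶠ q : (Fin d → X) × Set X in 𝓝 f ×ˢ (𝓝 a).smallSets,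
      count q.2 (mk q.1) ≤ count {a} (mk f) := by
    have hall := eventually_all.2 fun i => eventually_imp_distrib_left.2 (hfar i)
    filter_upwards [hall] with q hq
    simp only [count_mk]
    refine Finset.sum_le_sum fun i _ => ?_
    by_cases hi : f i = a
    · rw [indicator_of_mem (mem_singleton_iff.2 hi)]
      exact indicator_le_self' (fun _ _ => zero_le_one) (q.1 i)
    · rw [indicator_of_notMem (hq i hi)]
      exact Nat.zero_le _
  rw [← isOpenQuotientMap_mk.map_nhds_eq]
  change ∀ᶠ q in Filter.map mk (𝓝 f) ×ˢ (𝓝 a).smallSets, _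
  rw [← Filter.map_id (f := (𝓝 a).smallSets), prod_map_map_eq]
  exact hcount

theorem eventually_forall_count_le [T2Space X] {K : Set (SP X d)} (hK : IsCompact K) {a : X}
    {k : ℕ} (hk : ∀ s ∈ K, count {a} s ≤ k) :
    ∀ᶠ U in (𝓝 a).smallSets, ∀ s ∈ K, count U s ≤ k := by
  obtain ⟨K', hK', 𝒰, h𝒰, hcount⟩ := mem_prod_iff.1 <| hK.mem_nhdsSet_prod_of_forall fun s hs =>
    (eventually_count_le_count_singleton a s).mono fun _ hq => hq.trans (hk s hs)
  filter_upwards [h𝒰] with U hU s hs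
  exact hcount (mk_mem_prod (subset_of_mem_nhdsSet hK' hs) hU)

end SP
end SymmetricProducts

section GeneralPosition

open Set Function Topology

theorem continuous_extend_zero {V X W : Type*} [TopologicalSpace V] [TopologicalSpace X]
    [T2Space X] [TopologicalSpace W] [Zero W] {e : V → X} (he : IsOpenEmbedding e) {φ : V → W}
    (hφ : Continuous φ) (hsupp : HasCompactSupport φ) : Continuous (extend e φ 0) :=
  continuous_of_tsupport fun x hx => by
    obtain ⟨v, -, rfl⟩ := hsupp.tsupport_extend_zero_subset he.continuous hx
    rw [← he.continuousAt_iff, extend_comp he.injective]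
    exact hφ.continuousAt

theorem exists_bump_chart {V X : Type*} [NormedAddCommGroup V] [NormedSpace ℝ V]
    [FiniteDimensional ℝ V] [TopologicalSpace X] [T2Space X] {e : V → X} (he : IsOpenEmbedding e)
    {N : Set X} (hN : N ∈ 𝓝 (e 0)) :
    ∃ (χ : C(X, ℝ)) (ψ : C(X, V)), ∃ r > 0, 0 ≤ ⇑χ ∧ (∀ p ∉ N, χ p = 0 ∧ ψ p = 0) ∧
      ∀ v, ‖v‖ < r → e v ∈ N ∧ χ (e v) = 1 ∧ ψ (e v) = v := by
  obtain ⟨R, hR, hRN⟩ := Metric.mem_nhds_iff.1 (he.continuous.continuousAt.preimage_mem_nhds hN)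
  let f : ContDiffBump (0 : V) := ⟨R / 2, R, half_pos hR, half_lt_self hR⟩
  have hfN {v : V} (hv : e v ∉ N) : f v = 0 :=
    f.zero_of_le_dist (not_lt.1 fun hlt => hv (hRN hlt))
  refine ⟨⟨extend e f 0, continuous_extend_zero he f.continuous f.hasCompactSupport⟩,
    ⟨extend e (fun v => f v • v) 0, continuous_extend_zero he (f.continuous.smul continuous_id)
      f.hasCompactSupport.smul_right⟩, R / 2, half_pos hR, fun p => ?_, fun p hp => ?_,
    fun v hv => ?_⟩
  · by_cases hp : ∃ v, e v = p
    · obtain ⟨v, rfl⟩ := hp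
      exact f.nonneg.trans_eq (he.injective.extend_apply _ _ v).symm
    · exact (extend_apply' _ _ p hp).ge
  · by_cases hp' : ∃ v, e v = p
    · obtain ⟨v, rfl⟩ := hp'
      simp [he.injective.extend_apply, hfN hp]
    · simp [extend_apply' _ _ p hp']
  · have hfv : f v = 1 := f.one_of_mem_closedBall (mem_closedBall_zero_iff.2 hv.le)
    refine ⟨hRN (mem_ball_zero_iff.2 (hv.trans (half_lt_self hR))), ?_, ?_⟩
    · simp [he.injective.extend_apply, hfv]
    · simp [he.injective.extend_apply, hfv]

/-- Every map `D → V` can be avoided by arbitrarily small maps. For compact `D` this holds as soon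
as `D` embeds in a space of dimension less than that of `V`. -/
def IsThin (D V : Type*) [TopologicalSpace D] [NormedAddCommGroup V] : Prop :=
  ∀ c : C(D, V), ∀ ε > 0, ∃ u : C(D, V), (∀ x, ‖u x‖ < ε) ∧ ∀ x, u x ≠ c x

-- The perturbation is the error of a smooth approximation `h` of `c`, up to a point off the range
-- of `h`, which is not all of `V` by Sard's theorem.
theorem isThin_of_isClosedEmbedding {D E V : Type*} [TopologicalSpace D]
    [NormedAddCommGroup E] [NormedSpace ℝ E] [FiniteDimensional ℝ E]
    [NormedAddCommGroup V] [NormedSpace ℝ V] [FiniteDimensional ℝ V] {ι : D → E}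
    (hι : IsClosedEmbedding ι) (hdim : Module.finrank ℝ E < Module.finrank ℝ V) :
    IsThin D V := by
  intro c ε hε
  have hιcont := hι.continuous
  obtain ⟨c', hc'⟩ := ContinuousMap.exists_extension' hι c
  obtain ⟨h, hh, hdist, -⟩ := c'.continuous.exists_contDiff_approx 1
    (continuous_const (y := ε / 2)) fun _ => half_pos hε
  obtain ⟨y, hy, hyε⟩ :=
    (hh.dense_compl_range_of_finrank_lt_finrank hdim).exists_dist_lt 0 (half_pos hε)
  refine ⟨⟨fun x => y + c x - h (ι x), by fun_prop⟩, fun x => ?_, fun x hx => ?_⟩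
  · have hx : dist (h (ι x)) (c x) < ε / 2 := congrFun hc' x ▸ hdist (ι x)
    calc ‖y + c x - h (ι x)‖ = ‖y - (h (ι x) - c x)‖ := by congr 1; abel
      _ ≤ ‖y‖ + ‖h (ι x) - c x‖ := norm_sub_le _ _
      _ < ε := by rw [dist_zero_left] at hyε; rw [dist_eq_norm] at hx; linarith
  · have hyh : y = h (ι x) := by
      have hx : y + c x - h (ι x) = c x := hx
      rwa [sub_eq_iff_eq_add, add_comm, add_right_inj] at hx
    exact hy ⟨ι x, hyh.symm⟩

/-- Hatcher's compression criterion: every map of pairs `(D, B) → (Z, A)` is homotopic, relative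
to `B`, to a map into `A`. -/
def Compressible {D Z : Type*} [TopologicalSpace D] [TopologicalSpace Z] (A : Set Z)
    (B : Set D) : Prop :=
  ∀ g : C(D, Z), MapsTo g B A → ∃ g' : C(D, Z), g.HomotopicRel g' B ∧ ∀ x, g' x ∈ A

theorem homotopicRel_vadd {D Z V : Type*} [TopologicalSpace D] [TopologicalSpace Z]
    [AddCommGroup V] [Module ℝ V] [TopologicalSpace V] [ContinuousSMul ℝ V] [AddAction V Z]
    [ContinuousVAdd V Z] (g : C(D, Z)) {v : C(D, V)} {B : Set D} (hv : ∀ x ∈ B, v x = 0) :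
    g.HomotopicRel ⟨fun x => v x +ᵥ g x, by fun_prop⟩ B :=
  ⟨{ toFun := fun a => ((a.1 : ℝ) • v a.2) +ᵥ g a.2
     map_zero_left := fun x => by simp
     map_one_left := fun x => by simp
     prop' := fun t x hx => by simp [hv x hx] }⟩

section

variable {D V : Type*} {X : Type} [TopologicalSpace D] [CompactSpace D]
  [TopologicalSpace X] [T2Space X] [NormedAddCommGroup V] [NormedSpace ℝ V]
  [FiniteDimensional ℝ V] [AddAction V X] {p₀ : X} {d : ℕ} {B : Set D}

theorem exists_mem_nhds_count_le (hB : IsClosed B) (g : C(D, SP X d))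
    (hgB : ∀ x ∈ B, SPAvoids (g x) p₀) {j : ℕ} (hg : ∀ x, SP.count {p₀} (g x) ≤ j) :
    ∃ N ∈ 𝓝 p₀, (∀ x, SP.count N (g x) ≤ j) ∧ ∀ x ∈ B, SP.count N (g x) = 0 := by
  have hrange := SP.eventually_forall_count_le (isCompact_range g.continuous)
    (forall_mem_range.2 hg)
  have himage := SP.eventually_forall_count_le (hB.isCompact.image g.continuous)
    (forall_mem_image.2 fun x hx => (SP.count_singleton_eq_zero_iff.2 (hgB x hx)).le)
  obtain ⟨N, hN, hgN⟩ := Filter.eventually_smallSets.1 (hrange.and himage)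
  obtain ⟨hN₁, hN₀⟩ := hgN N Subset.rfl
  exact ⟨N, hN, forall_mem_range.1 hN₁, fun x hx => Nat.le_zero.1 (hN₀ _ (mem_image_of_mem g hx))⟩

-- If `v` translated `j + 1` entries onto `p₀`, these would be all the entries near `p₀`, so the
-- average of the chart over the entries near `p₀` would be their common value, which `u` avoids.
theorem exists_count_vadd_le (he : IsOpenEmbedding fun v : V => v +ᵥ p₀) (hD : IsThin D V)
    (hB : IsClosed B) (g : C(D, SP X d)) (hgB : ∀ x ∈ B, SPAvoids (g x) p₀) {j : ℕ}
    (hg : ∀ x, SP.count {p₀} (g x) ≤ j + 1) :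
    ∃ v : C(D, V), (∀ x ∈ B, v x = 0) ∧ ∀ x, SP.count {p₀} (v x +ᵥ g x) ≤ j := by
  obtain ⟨N, hN, hN₁, hN₀⟩ := exists_mem_nhds_count_le hB g hgB hg
  obtain ⟨χ, ψ, r, hr, hχ, hoff, hnear⟩ := exists_bump_chart he (N := N) (by rwa [zero_vadd])
  have hχs := SP.continuous_sum (d := d) χ.continuous
  have hψs := SP.continuous_sum (d := d) ψ.continuous
  obtain ⟨u, hur, hu⟩ := hD ⟨fun x => (j + 1 : ℝ)⁻¹ • SP.sum ψ (g x), by fun_prop⟩ r hr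
  let v : C(D, V) := ⟨fun x => -(min 1 |SP.sum χ (g x)| • u x), by fun_prop⟩
  refine ⟨v, fun x hx => ?_, fun x => Nat.le_of_lt_succ <| not_le.1 fun hj => ?_⟩
  · have hsum : SP.sum χ (g x) = 0 :=
      SP.sum_eq_zero_of_count_eq_zero (fun p hp => (hoff p hp).1) (hN₀ x hx)
    simp [v, hsum]
  have hvr : ‖-v x‖ < r := by
    refine lt_of_le_of_lt ?_ (hur x)
    rw [show -v x = min 1 |SP.sum χ (g x)| • u x from neg_neg _, norm_smul,
      Real.norm_of_nonneg (le_min zero_le_one (abs_nonneg _))]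
    exact mul_le_of_le_one_left (norm_nonneg _) (min_le_left _ _)
  obtain ⟨hqN, hχq, hψq⟩ := hnear _ hvr
  have hcount : SP.count {p₀} (v x +ᵥ g x) = SP.count {-v x +ᵥ p₀} (g x) := by
    rw [← SP.count_singleton_vadd (v x) (-v x +ᵥ p₀), vadd_vadd, add_neg_cancel, zero_vadd]
  rw [hcount] at hj
  have hqcount : SP.count {-v x +ᵥ p₀} (g x) = j + 1 :=
    ((SP.count_mono (singleton_subset_iff.2 hqN) _).trans (hN₁ x)).antisymm hj
  have hcut : 1 ≤ |SP.sum χ (g x)| :=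
    (hχq.ge.trans (SP.le_sum_of_count_ne_zero hχ (by simp [hqcount]))).trans (le_abs_self _)
  have hvu : -v x = u x := by simp [v, min_eq_left hcut]
  have hsum : SP.sum ψ (g x) = (j + 1) • u x := by
    rw [SP.sum_eq_count_smul (fun p hp => (hoff p hp).2) hqN ((hN₁ x).trans hj), hqcount, hψq, hvu]
  refine hu x ?_
  change u x = (j + 1 : ℝ)⁻¹ • SP.sum ψ (g x)
  rw [hsum, ← Nat.cast_smul_eq_nsmul ℝ, Nat.cast_succ, inv_smul_smul₀ (by positivity)]

theorem exists_homotopicRel_spAvoids [ContinuousVAdd V X]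
    (he : IsOpenEmbedding fun v : V => v +ᵥ p₀) (hD : IsThin D V) (hB : IsClosed B)
    (g : C(D, SP X d)) (hgB : ∀ x ∈ B, SPAvoids (g x) p₀) {j : ℕ}
    (hg : ∀ x, SP.count {p₀} (g x) ≤ j) :
    ∃ g' : C(D, SP X d), g.HomotopicRel g' B ∧ ∀ x, SPAvoids (g' x) p₀ := by
  induction j generalizing g with
  | zero =>
    exact ⟨g, .refl g, fun x => SP.count_singleton_eq_zero_iff.1 (Nat.le_zero.1 (hg x))⟩
  | succ j ih =>
    obtain ⟨v, hvB, hv⟩ := exists_count_vadd_le he hD hB g hgB hg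
    have hgv := homotopicRel_vadd g hvB
    obtain ⟨g', hg', havoid⟩ := ih _ (fun x hx => hgv.fst_eq_snd hx ▸ hgB x hx) hv
    exact ⟨g', hgv.trans hg', havoid⟩

theorem compressible_setOf_spAvoids [ContinuousVAdd V X]
    (he : IsOpenEmbedding fun v : V => v +ᵥ p₀) (hD : IsThin D V) (hB : IsClosed B) :
    Compressible {s : SP X d | SPAvoids s p₀} B :=
  fun g hgB => exists_homotopicRel_spAvoids he hD hB g hgB fun x => SP.count_le _ (g x)

end

end GeneralPosition

section Homotopy

open Set Function Topology unitInterval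

/-- A strong deformation retraction of `A` onto the image of the embedding `i`. The maps are total
functions whose values off `A` are irrelevant. -/
structure StrongDeformationRetraction {X Y : Type*} [TopologicalSpace X] [TopologicalSpace Y]
    (A : Set X) (i : Y → X) where
  retract : X → Y
  homotopy : I → X → X
  apply_mem : ∀ y, i y ∈ A
  mapsTo_homotopy : ∀ t, MapsTo (homotopy t) A A
  continuousOn_retract : ContinuousOn retract A
  continuousOn_homotopy : ContinuousOn (uncurry homotopy) (univ ×ˢ A)
  retract_apply : ∀ y, retract (i y) = y
  homotopy_zero : ∀ x ∈ A, homotopy 0 x = i (retract x)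
  homotopy_one : ∀ x ∈ A, homotopy 1 x = x
  homotopy_apply : ∀ t y, homotopy t (i y) = i y

namespace StrongDeformationRetraction

variable {X Y : Type} [TopologicalSpace X] [TopologicalSpace Y]

/-- The strong deformation retraction of the unordered tuples avoiding `a` that moves every entry
by a strong deformation retraction of the complement of `a`. -/
def symmetricProduct [T1Space X] {a : X} {i : Y → X} (r : StrongDeformationRetraction {a}ᶜ i)
    (d : ℕ) : StrongDeformationRetraction {s : SP X d | SPAvoids s a} (SP.map i) where
  retract := SP.map r.retract
  homotopy t := SP.map (r.homotopy t)
  apply_mem s := by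
    obtain ⟨f, rfl⟩ := SP.mk_surjective s
    exact SP.avoids_mk.2 fun j => r.apply_mem (f j)
  mapsTo_homotopy t s hs := by
    obtain ⟨f, rfl⟩ := SP.mk_surjective s
    exact SP.avoids_mk.2 fun j => r.mapsTo_homotopy t (SP.avoids_mk.1 hs j)
  continuousOn_retract s hs := by
    obtain ⟨f, rfl⟩ := SP.mk_surjective s
    refine (SP.continuousAt_map fun j => ?_).continuousWithinAt
    exact r.continuousOn_retract.continuousAt
      (isOpen_compl_singleton.mem_nhds (SP.avoids_mk.1 hs j))
  continuousOn_homotopy := by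
    rintro ⟨t, s⟩ ⟨-, hs⟩
    obtain ⟨f, rfl⟩ := SP.mk_surjective s
    refine (SP.continuousAt_map_prod fun j => ?_).continuousWithinAt
    exact r.continuousOn_homotopy.continuousAt ((isOpen_univ.prod isOpen_compl_singleton).mem_nhds
      ⟨mem_univ t, SP.avoids_mk.1 hs j⟩)
  retract_apply s := by
    obtain ⟨f, rfl⟩ := SP.mk_surjective s
    exact congrArg SP.mk (funext fun j => r.retract_apply (f j))
  homotopy_zero s hs := by
    obtain ⟨f, rfl⟩ := SP.mk_surjective s
    exact congrArg SP.mk (funext fun j => r.homotopy_zero _ (SP.avoids_mk.1 hs j))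
  homotopy_one s hs := by
    obtain ⟨f, rfl⟩ := SP.mk_surjective s
    exact congrArg SP.mk (funext fun j => r.homotopy_one _ (SP.avoids_mk.1 hs j))
  homotopy_apply t s := by
    obtain ⟨f, rfl⟩ := SP.mk_surjective s
    exact congrArg SP.mk (funext fun j => r.homotopy_apply t (f j))

variable {N : Type} {A : Set X} {F : C(Y, X)}

theorem homotopicRel_comp_retract {D : Type*} [TopologicalSpace D]
    (r : StrongDeformationRetraction A F) {g : C(D, X)} (hg : ∀ x, g x ∈ A) {B : Set D}
    (hB : ∀ x ∈ B, g x ∈ range F) :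
    (F.comp ⟨r.retract ∘ g, r.continuousOn_retract.comp_continuous g.continuous hg⟩).HomotopicRel
      g B :=
  ⟨{ toFun := fun a => r.homotopy a.1 (g a.2)
     continuous_toFun := r.continuousOn_homotopy.comp_continuous
       (f := fun a : I × D => (a.1, g a.2)) (by fun_prop) fun a => ⟨mem_univ _, hg a.2⟩
     map_zero_left := fun x => r.homotopy_zero _ (hg x)
     map_one_left := fun x => r.homotopy_one _ (hg x)
     prop' := fun t x hx => by
       obtain ⟨y, hy⟩ := hB x hx
       simp [← hy, r.homotopy_apply, r.retract_apply] }⟩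

theorem inducedMap_injective (r : StrongDeformationRetraction A F) (x : Y)
    (hA : Compressible A {a : I × (N → I) | a.1 = 0 ∨ a.1 = 1 ∨ a.2 ∈ Cube.boundary N}) :
    Injective (HomotopyGroup.inducedMap N F x) := by
  rintro ⟨α⟩ ⟨β⟩ hαβ
  obtain ⟨H⟩ := Quotient.exact hαβ
  have hbdry : MapsTo H {a : I × (N → I) | a.1 = 0 ∨ a.1 = 1 ∨ a.2 ∈ Cube.boundary N}
      (range F) := by
    rintro ⟨t, y⟩ (rfl | rfl | hy)
    · exact ⟨α y, (H.apply_zero y).symm⟩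
    · exact ⟨β y, (H.apply_one y).symm⟩
    · exact ⟨α y, (H.eq_fst t hy).symm⟩
  obtain ⟨H', hHH', hH'⟩ := hA H fun a ha => by
    obtain ⟨y, hy⟩ := hbdry ha
    exact hy ▸ r.apply_mem y
  have hretract {t : I} {y : N → I} (hty : t = 0 ∨ t = 1 ∨ y ∈ Cube.boundary N) {z : Y}
      (hz : H (t, y) = F z) : r.retract (H' (t, y)) = z := by
    rw [← hHH'.fst_eq_snd hty]
    exact (congrArg r.retract hz).trans (r.retract_apply z)
  exact Quotient.sound ⟨{
    toFun := fun a => r.retract (H' a)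
    continuous_toFun := r.continuousOn_retract.comp_continuous H'.continuous hH'
    map_zero_left := fun y => hretract (.inl rfl) (H.apply_zero y)
    map_one_left := fun y => hretract (.inr (.inl rfl)) (H.apply_one y)
    prop' := fun t y hy => hretract (.inr (.inr hy)) (H.eq_fst t hy) }⟩

theorem inducedMap_surjective (r : StrongDeformationRetraction A F) (x : Y)
    (hA : Compressible A (Cube.boundary N)) :
    Surjective (HomotopyGroup.inducedMap N F x) := by
  rintro ⟨α⟩
  obtain ⟨α', hαα', hα'⟩ := hA α.1 fun y hy => (α.2 y hy).symm ▸ r.apply_mem x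
  have hbdry : ∀ y ∈ Cube.boundary N, α' y = F x := fun y hy =>
    (hαα'.fst_eq_snd hy).symm.trans (α.2 y hy)
  let β : GenLoop N Y x :=
    ⟨⟨r.retract ∘ α', r.continuousOn_retract.comp_continuous α'.continuous hα'⟩, fun y hy =>
      (congrArg r.retract (hbdry y hy)).trans (r.retract_apply x)⟩
  have hFβ : (F.comp β.1).HomotopicRel α' (Cube.boundary N) :=
    r.homotopicRel_comp_retract hα' fun y hy => ⟨x, (hbdry y hy).symm⟩
  exact ⟨Quotient.mk _ β, Quotient.sound (hFβ.trans hαα'.symm)⟩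

end StrongDeformationRetraction

theorem isClosed_cubeBoundary (N : Type*) [Finite N] : IsClosed (Cube.boundary N) := by
  have hunion : Cube.boundary N = ⋃ i, ({y | y i = 0} ∪ {y | y i = 1}) := by
    ext y
    simp [Cube.boundary]
  rw [hunion]
  exact isClosed_iUnion_of_finite fun i =>
    (isClosed_eq (continuous_apply i) continuous_const).union
      (isClosed_eq (continuous_apply i) continuous_const)

theorem isClosed_unitInterval_prod_cubeBoundary (N : Type*) [Finite N] :
    IsClosed {a : I × (N → I) | a.1 = 0 ∨ a.1 = 1 ∨ a.2 ∈ Cube.boundary N} :=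
  (isClosed_eq continuous_fst continuous_const).union <|
    (isClosed_eq continuous_fst continuous_const).union <|
      (isClosed_cubeBoundary N).preimage continuous_snd

theorem isThin_cube (N : Type*) [Fintype N] {V : Type*} [NormedAddCommGroup V] [NormedSpace ℝ V]
    [FiniteDimensional ℝ V] (hN : Fintype.card N < Module.finrank ℝ V) : IsThin (N → I) V :=
  isThin_of_isClosedEmbedding (ι := fun y j => (y j : ℝ))
    (Continuous.isClosedEmbedding (by fun_prop) fun y y' h =>
      funext fun j => Subtype.ext (congrFun h j)) (by simpa using hN)

theorem isThin_unitInterval_prod_cube (N : Type*) [Fintype N] {V : Type*} [NormedAddCommGroup V]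
    [NormedSpace ℝ V] [FiniteDimensional ℝ V] (hN : Fintype.card N + 1 < Module.finrank ℝ V) :
    IsThin (I × (N → I)) V :=
  isThin_of_isClosedEmbedding (ι := fun a => ((a.1 : ℝ), fun j => (a.2 j : ℝ)))
    (Continuous.isClosedEmbedding (by fun_prop) fun a a' h => Prod.ext
      (Subtype.ext (congrArg Prod.fst h))
      (funext fun j => Subtype.ext (congrFun (congrArg Prod.snd h) j)))
    (by simpa [add_comm] using hN)

end Homotopy

section ProjectiveSpace

open Set Function Topology unitInterval

namespace CP

variable {n m : ℕ}

/-- The point of projective space with homogeneous coordinates `v`, with junk value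
`[1 : 0 : ⋯ : 0]` for `v = 0`. -/
noncomputable def ofVector (v : Fin (n + 1) → ℂ) : CP n :=
  open Classical in
  if hv : v = 0 then Projectivization.mk ℂ (Pi.single 0 1) (by simp)
  else Projectivization.mk ℂ v hv

theorem ofVector_of_ne_zero {v : Fin (n + 1) → ℂ} (hv : v ≠ 0) :
    ofVector v = Projectivization.mk ℂ v hv := dif_neg hv

theorem exists_ofVector (p : CP n) : ∃ v : Fin (n + 1) → ℂ, v ≠ 0 ∧ ofVector v = p :=
  ⟨p.rep, p.rep_nonzero, (ofVector_of_ne_zero p.rep_nonzero).trans p.mk_rep⟩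

theorem ofVector_eq_ofVector_iff {v w : Fin (n + 1) → ℂ} (hv : v ≠ 0) (hw : w ≠ 0) :
    ofVector v = ofVector w ↔ ∃ a : ℂ, a • w = v := by
  rw [ofVector_of_ne_zero hv, ofVector_of_ne_zero hw]
  exact Projectivization.mk_eq_mk_iff' ℂ v w hv hw

theorem ofVector_eq_ofVector_iff_mul_eq_mul {v w : Fin (n + 1) → ℂ} (hv : v ≠ 0) (hw : w ≠ 0) :
    ofVector v = ofVector w ↔ ∀ i j, v i * w j = v j * w i := by
  rw [ofVector_eq_ofVector_iff hv hw]
  constructor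
  · rintro ⟨a, rfl⟩ i j
    simp only [Pi.smul_apply, smul_eq_mul]
    ring
  · intro hvw
    obtain ⟨j, hj⟩ := Function.ne_iff.1 hw
    refine ⟨v j / w j, funext fun i => ?_⟩
    rw [Pi.smul_apply, smul_eq_mul, div_mul_eq_mul_div, ← hvw i j, mul_div_cancel_right₀ _ hj]

theorem isOpenQuotientMap_ofVector :
    IsOpenQuotientMap fun v : {v : Fin (n + 1) → ℂ // v ≠ 0} => ofVector v.1 := by
  have hmk : (fun v : {v : Fin (n + 1) → ℂ // v ≠ 0} => ofVector v.1) =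
      Quotient.mk (projectivizationSetoid ℂ (Fin (n + 1) → ℂ)) :=
    funext fun v => ofVector_of_ne_zero v.2
  rw [hmk]
  exact isOpenQuotientMap_quotientMk
    (e := fun (a : ℂˣ) v => ⟨a • v.1, (smul_ne_zero_iff_ne a).2 v.2⟩) (fun a => by fun_prop)
    fun v w => (Setoid.comm' _).trans <| exists_congr fun a =>
      (Subtype.ext_iff (a1 := ⟨a • v.1, _⟩)).symm

theorem continuousAt_ofVector {v : Fin (n + 1) → ℂ} (hv : v ≠ 0) :
    ContinuousAt (ofVector : (Fin (n + 1) → ℂ) → CP n) v :=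
  (isOpen_ne.isOpenEmbedding_subtypeVal.continuousAt_iff (x := ⟨v, hv⟩)).1
    isOpenQuotientMap_ofVector.continuous.continuousAt

instance : T2Space (CP n) := by
  refine (t2Space_iff_of_isOpenQuotientMap isOpenQuotientMap_ofVector).2 ?_
  have hset : {q : {v : Fin (n + 1) → ℂ // v ≠ 0} × {v : Fin (n + 1) → ℂ // v ≠ 0} |
      ofVector q.1.1 = ofVector q.2.1} = ⋂ i, ⋂ j, {q | q.1.1 i * q.2.1 j = q.1.1 j * q.2.1 i} := by
    ext q
    simp only [mem_ofPred_eq, mem_iInter, ofVector_eq_ofVector_iff_mul_eq_mul q.1.2 q.2.2]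
  rw [hset]
  have hcoord (i : Fin (n + 1)) : Continuous fun v : {v : Fin (n + 1) → ℂ // v ≠ 0} => v.1 i :=
    (continuous_apply i).comp continuous_subtype_val
  exact isClosed_iInter fun i => isClosed_iInter fun j => isClosed_eq
    (((hcoord i).comp continuous_fst).mul ((hcoord j).comp continuous_snd))
    (((hcoord j).comp continuous_fst).mul ((hcoord i).comp continuous_snd))

/-- The map of projective spaces given by `L` in homogeneous coordinates, with junk values on the
projectivization of the kernel of `L`. -/
noncomputable def map (L : (Fin (n + 1) → ℂ) →ₗ[ℂ] (Fin (m + 1) → ℂ)) (p : CP n) : CP m :=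
  ofVector (L p.rep)

theorem map_ofVector (L : (Fin (n + 1) → ℂ) →ₗ[ℂ] (Fin (m + 1) → ℂ)) {v : Fin (n + 1) → ℂ}
    (hv : L v ≠ 0) : map L (ofVector v) = ofVector (L v) := by
  have hv' : v ≠ 0 := fun h => hv (h ▸ L.map_zero)
  obtain ⟨a, ha⟩ := Projectivization.exists_smul_eq_mk_rep ℂ v hv'
  have hLa : L (a • v) = (a : ℂ) • L v := L.map_smul a v
  rw [map, ofVector_of_ne_zero hv', ← ha, hLa,
    ofVector_eq_ofVector_iff (smul_ne_zero a.ne_zero hv) hv]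
  exact ⟨a, rfl⟩

theorem continuousAt_map_prod {P : Type*} [TopologicalSpace P]
    {L : P → (Fin (n + 1) → ℂ) →ₗ[ℂ] (Fin (m + 1) → ℂ)}
    (hL : Continuous fun b : P × (Fin (n + 1) → ℂ) => L b.1 b.2) {a : P} {v : Fin (n + 1) → ℂ}
    (hv : L a v ≠ 0) :
    ContinuousAt (fun b : P × CP n => map (L b.1) b.2) (a, ofVector v) := by
  have hq : IsOpenQuotientMap
      (Prod.map id (fun v => ofVector v.1) : P × {v : Fin (n + 1) → ℂ // v ≠ 0} → P × CP n) :=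
    IsOpenQuotientMap.id.prodMap isOpenQuotientMap_ofVector
  let w : {v : Fin (n + 1) → ℂ // v ≠ 0} := ⟨v, fun h => hv (h ▸ (L a).map_zero)⟩
  have hLw : Continuous fun b : P × {v : Fin (n + 1) → ℂ // v ≠ 0} => L b.1 b.2 :=
    hL.comp (continuous_fst.prodMk (continuous_subtype_val.comp continuous_snd))
  refine (hq.continuousAt_comp_iff (x := (a, w))).1 ?_
  refine ((continuousAt_ofVector hv).comp_of_eq hLw.continuousAt rfl).congr ?_
  filter_upwards [hLw.continuousAt.eventually_ne hv] with b hb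
  exact (map_ofVector (L b.1) hb).symm

theorem continuousAt_map (L : (Fin (n + 1) → ℂ) →ₗ[ℂ] (Fin (m + 1) → ℂ)) {v : Fin (n + 1) → ℂ}
    (hv : L v ≠ 0) : ContinuousAt (map L) (ofVector v) := by
  have hL : Continuous fun b : Unit × (Fin (n + 1) → ℂ) => L b.2 :=
    L.continuous_of_finiteDimensional.comp continuous_snd
  exact (continuousAt_map_prod (L := fun _ => L) (a := ()) hL hv).comp_of_eq
    (f := fun p => ((), p)) (by fun_prop) rfl

/-- The linear map `v ↦ v + v_{n+1} w` in homogeneous coordinates of `ℂP^{n+1}`. For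
`w = (u, 0)` it is the translation by `u` of the affine chart centred at `lastPoint n`; for
`w = (0, t - 1)` it multiplies the last coordinate by `t`. -/
noncomputable def shear (w : Fin (n + 2) → ℂ) : (Fin (n + 2) → ℂ) →ₗ[ℂ] (Fin (n + 2) → ℂ) :=
  LinearMap.transvection (LinearMap.proj (Fin.last (n + 1))) w

theorem shear_apply (w v : Fin (n + 2) → ℂ) : shear w v = v + v (Fin.last (n + 1)) • w := rfl

theorem shear_zero (v : Fin (n + 2) → ℂ) : shear 0 v = v := by
  rw [shear_apply, smul_zero, add_zero]

theorem continuous_shear :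
    Continuous fun b : (Fin (n + 2) → ℂ) × (Fin (n + 2) → ℂ) => shear b.1 b.2 := by
  simp only [shear_apply]
  fun_prop

theorem shear_ne_zero {w v : Fin (n + 2) → ℂ} (hw : w (Fin.last (n + 1)) = 0) (hv : v ≠ 0) :
    shear w v ≠ 0 := by
  intro h
  have hlast : v (Fin.last (n + 1)) = 0 := by
    simpa [shear_apply, hw] using congrFun h (Fin.last (n + 1))
  rw [shear_apply, hlast, zero_smul, add_zero] at h
  exact hv h

theorem snoc_zero_add (u u' : Fin (n + 1) → ℂ) :
    (Fin.snoc (u + u') 0 : Fin (n + 2) → ℂ) = Fin.snoc u 0 + Fin.snoc u' 0 := by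
  ext i
  cases i using Fin.lastCases <;> simp

theorem snoc_zero_zero : (Fin.snoc (0 : Fin (n + 1) → ℂ) 0 : Fin (n + 2) → ℂ) = 0 := by
  ext i
  cases i using Fin.lastCases <;> simp

/-- The action of the translations of the affine chart `u ↦ [u : 1]`, which fix the hyperplane at
infinity. -/
noncomputable instance : VAdd (Fin (n + 1) → ℂ) (CP (n + 1)) where
  vadd u := map (shear (Fin.snoc u 0))

theorem vadd_ofVector (u : Fin (n + 1) → ℂ) {v : Fin (n + 2) → ℂ} (hv : v ≠ 0) :
    u +ᵥ ofVector v = ofVector (shear (Fin.snoc u 0) v) :=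
  map_ofVector _ (shear_ne_zero (by simp) hv)

noncomputable instance : AddAction (Fin (n + 1) → ℂ) (CP (n + 1)) where
  zero_vadd p := by
    obtain ⟨v, hv, rfl⟩ := exists_ofVector p
    rw [vadd_ofVector 0 hv, snoc_zero_zero, shear_zero]
  add_vadd u u' p := by
    obtain ⟨v, hv, rfl⟩ := exists_ofVector p
    have hu' : (Fin.snoc u' 0 : Fin (n + 2) → ℂ) (Fin.last (n + 1)) = 0 := Fin.snoc_last _ _
    rw [vadd_ofVector _ hv, vadd_ofVector _ hv, vadd_ofVector _ (shear_ne_zero hu' hv),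
      snoc_zero_add]
    exact congrArg ofVector (LinearMap.transvection.comp_of_left_eq_apply hu').symm

instance : ContinuousVAdd (Fin (n + 1) → ℂ) (CP (n + 1)) where
  continuous_vadd := by
    refine continuous_iff_continuousAt.2 ?_
    rintro ⟨u, p⟩
    obtain ⟨v, hv, rfl⟩ := exists_ofVector p
    refine continuousAt_map_prod (L := fun u : Fin (n + 1) → ℂ => shear (Fin.snoc u 0)) ?_
      (shear_ne_zero (by simp) hv)
    exact continuous_shear.comp ((continuous_fst.finSnoc continuous_const).prodMk continuous_snd)

theorem lastPoint_eq_ofVector : lastPoint n = ofVector (Pi.single (Fin.last (n + 1)) 1) :=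
  (ofVector_of_ne_zero _).symm

theorem vadd_lastPoint (u : Fin (n + 1) → ℂ) : u +ᵥ lastPoint n = ofVector (Fin.snoc u 1) := by
  rw [lastPoint_eq_ofVector, vadd_ofVector u (by simp)]
  congr 1
  ext i
  cases i using Fin.lastCases <;> simp [shear_apply]

theorem snoc_one_ne_zero (u : Fin (n + 1) → ℂ) : (Fin.snoc u 1 : Fin (n + 2) → ℂ) ≠ 0 :=
  fun h => by simpa using congrFun h (Fin.last (n + 1))

theorem ofVector_snoc_one_eq_iff {u : Fin (n + 1) → ℂ} {v : Fin (n + 2) → ℂ} (hv : v ≠ 0) :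
    ofVector (Fin.snoc u 1) = ofVector v ↔
      v (Fin.last (n + 1)) ≠ 0 ∧ (v (Fin.last (n + 1)))⁻¹ • Fin.init v = u := by
  rw [ofVector_eq_ofVector_iff (snoc_one_ne_zero u) hv]
  constructor
  · rintro ⟨a, ha⟩
    have hlast : a * v (Fin.last (n + 1)) = 1 := by simpa using congrFun ha (Fin.last (n + 1))
    refine ⟨right_ne_zero_of_mul_eq_one hlast, ?_⟩
    rw [← eq_inv_of_mul_eq_one_left hlast]
    exact (congrArg Fin.init ha).trans (Fin.init_snoc (α := fun _ => ℂ) 1 u)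
  · rintro ⟨hlast, rfl⟩
    refine ⟨(v (Fin.last (n + 1)))⁻¹, funext fun i => ?_⟩
    cases i using Fin.lastCases <;> simp [hlast, Fin.init]

theorem isOpenEmbedding_vadd_lastPoint (n : ℕ) :
    IsOpenEmbedding fun u : Fin (n + 1) → ℂ => u +ᵥ lastPoint n := by
  refine .of_continuous_injective_isOpenMap (by fun_prop) (fun u u' huu' => ?_) fun U hU => ?_
  · simp only [vadd_lastPoint, ofVector_snoc_one_eq_iff (snoc_one_ne_zero u')] at huu'
    simpa using huu'.2.symm
  have hpre : (fun v : {v : Fin (n + 2) → ℂ // v ≠ 0} => ofVector v.1) ⁻¹'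
      ((fun u : Fin (n + 1) → ℂ => u +ᵥ lastPoint n) '' U) =
      {v | v.1 (Fin.last (n + 1)) ≠ 0} ∩
        (fun v => (v.1 (Fin.last (n + 1)))⁻¹ • Fin.init v.1) ⁻¹' U := by
    ext v
    simp [vadd_lastPoint, ofVector_snoc_one_eq_iff v.2, and_comm]
  have hlast : Continuous fun v : {v : Fin (n + 2) → ℂ // v ≠ 0} => v.1 (Fin.last (n + 1)) :=
    (continuous_apply _).comp continuous_subtype_val
  have hinit : Continuous fun v : {v : Fin (n + 2) → ℂ // v ≠ 0} =>
      (Fin.init v.1 : Fin (n + 1) → ℂ) := continuous_subtype_val.finInit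
  rw [← isOpenQuotientMap_ofVector.isQuotientMap.isOpen_preimage, hpre]
  exact ((hlast.continuousOn.inv₀ fun _ hv => hv).smul hinit.continuousOn).isOpen_inter_preimage
    (isOpen_ne_fun hlast continuous_const) hU

theorem ofVector_eq_lastPoint_iff {v : Fin (n + 2) → ℂ} (hv : v ≠ 0) :
    ofVector v = lastPoint n ↔ Fin.init v = (0 : Fin (n + 1) → ℂ) := by
  rw [eq_comm, ← zero_vadd (Fin (n + 1) → ℂ) (lastPoint n), vadd_lastPoint,
    ofVector_snoc_one_eq_iff hv]
  refine ⟨fun h => (smul_eq_zero_iff_right (inv_ne_zero h.1)).1 h.2, fun h => ?_⟩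
  refine ⟨fun hlast => hv ?_, by rw [h, smul_zero]⟩
  rw [← Fin.snoc_init_self v, h, hlast, snoc_zero_zero]

theorem ne_zero_of_init_ne_zero {v : Fin (n + 2) → ℂ}
    (hv : (Fin.init v : Fin (n + 1) → ℂ) ≠ 0) : v ≠ 0 := by
  rintro rfl
  exact hv rfl

theorem ofVector_ne_lastPoint {v : Fin (n + 2) → ℂ} (hv : (Fin.init v : Fin (n + 1) → ℂ) ≠ 0) :
    ofVector v ≠ lastPoint n :=
  mt (ofVector_eq_lastPoint_iff (ne_zero_of_init_ne_zero hv)).1 hv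

theorem exists_ofVector_of_ne_lastPoint {p : CP (n + 1)} (hp : p ≠ lastPoint n) :
    ∃ v : Fin (n + 2) → ℂ, (Fin.init v : Fin (n + 1) → ℂ) ≠ 0 ∧ ofVector v = p := by
  obtain ⟨v, hv, rfl⟩ := exists_ofVector p
  exact ⟨v, mt (ofVector_eq_lastPoint_iff hv).2 hp, rfl⟩

theorem init_shear_single (c : ℂ) (v : Fin (n + 2) → ℂ) :
    (Fin.init (shear (Pi.single (Fin.last (n + 1)) c) v) : Fin (n + 1) → ℂ) = Fin.init v := by
  ext i
  simp [Fin.init, shear_apply]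

theorem map_shear_single_ofVector (c : ℂ) {v : Fin (n + 2) → ℂ}
    (hv : (Fin.init v : Fin (n + 1) → ℂ) ≠ 0) :
    map (shear (Pi.single (Fin.last (n + 1)) c)) (ofVector v) =
      ofVector (shear (Pi.single (Fin.last (n + 1)) c) v) :=
  map_ofVector _ (ne_zero_of_init_ne_zero (by rwa [init_shear_single]))

/-- The strong deformation retraction of the complement of `[0 : ⋯ : 0 : 1]` onto the
hyperplane `x_{n+1} = 0` that multiplies the last coordinate by `t ∈ [0, 1]`. -/
noncomputable def hyperplaneRetraction {i : CP n → CP (n + 1)}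
    (hi : ∀ v : Fin (n + 1) → ℂ, v ≠ 0 → i (ofVector v) = ofVector (Fin.snoc v 0)) :
    StrongDeformationRetraction {lastPoint n}ᶜ i where
  retract := map (LinearMap.funLeft ℂ ℂ Fin.castSucc)
  homotopy t := map (shear (Pi.single (Fin.last (n + 1)) ((t : ℂ) - 1)))
  apply_mem p := by
    obtain ⟨v, hv, rfl⟩ := exists_ofVector p
    rw [hi v hv]
    exact ofVector_ne_lastPoint (by rwa [Fin.init_snoc])
  mapsTo_homotopy t p hp := by
    obtain ⟨v, hv, rfl⟩ := exists_ofVector_of_ne_lastPoint hp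
    rw [map_shear_single_ofVector _ hv]
    exact ofVector_ne_lastPoint (by rwa [init_shear_single])
  continuousOn_retract p hp := by
    obtain ⟨v, hv, rfl⟩ := exists_ofVector_of_ne_lastPoint hp
    exact (continuousAt_map _ hv).continuousWithinAt
  continuousOn_homotopy := by
    rintro ⟨t, p⟩ ⟨-, hp⟩
    obtain ⟨v, hv, rfl⟩ := exists_ofVector_of_ne_lastPoint hp
    refine (continuousAt_map_prod
      (L := fun t : I => shear (Pi.single (Fin.last (n + 1)) ((t : ℂ) - 1))) ?_
      (ne_zero_of_init_ne_zero (by rwa [init_shear_single]))).continuousWithinAt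
    exact continuous_shear.comp
      (((continuous_single _).comp (by fun_prop)).prodMk continuous_snd)
  retract_apply p := by
    obtain ⟨v, hv, rfl⟩ := exists_ofVector p
    have hinit : LinearMap.funLeft ℂ ℂ Fin.castSucc (Fin.snoc v 0) = v :=
      Fin.init_snoc (α := fun _ => ℂ) 0 v
    rw [hi v hv, map_ofVector _ (by rwa [hinit]), hinit]
  homotopy_zero p hp := by
    obtain ⟨v, hv, rfl⟩ := exists_ofVector_of_ne_lastPoint hp
    rw [map_shear_single_ofVector _ hv, map_ofVector _ hv]
    refine Eq.trans ?_ (hi (Fin.init v) hv).symm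
    congr 1
    ext i
    cases i using Fin.lastCases <;> simp [shear_apply, Fin.init]
  homotopy_one p hp := by
    obtain ⟨v, hv, rfl⟩ := exists_ofVector_of_ne_lastPoint hp
    rw [map_shear_single_ofVector _ hv]
    simp [shear_zero]
  homotopy_apply t p := by
    obtain ⟨v, hv, rfl⟩ := exists_ofVector p
    rw [hi v hv, map_shear_single_ofVector _ (by rwa [Fin.init_snoc])]
    simp [shear_apply]

end CP
end ProjectiveSpace

/-- **Proposition 3.5** (case `p = 0`): embedding `ℂP^n ⊆ ℂP^{n+1}` as the hyperplane
`{x_{n+1} = 0}` (i.e. `[x₀ : ⋯ : xₙ] ↦ [x₀ : ⋯ : xₙ : 0]`), the induced inclusion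
`SP^d(ℂP^n) ↪ SP^d(ℂP^{n+1})` induces isomorphisms on homotopy groups `π_k` for all
`0 ≤ k ≤ 2n`. Here `incl` is the hyperplane embedding and `F` is the continuous map it
induces entrywise on symmetric products. -/
theorem inclusion_sp_cp_pi_iso (n d : ℕ) (hd : 1 ≤ d)
    (incl : CP n → CP (n + 1))
    (hincl : ∀ (v : Fin (n + 1) → ℂ) (hv : v ≠ 0)
      (h' : (Fin.snoc v (0 : ℂ) : Fin (n + 2) → ℂ) ≠ 0),
      incl (Projectivization.mk ℂ v hv) = Projectivization.mk ℂ (Fin.snoc v (0 : ℂ)) h')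
    (F : C(SP (CP n) d, SP (CP (n + 1)) d))
    (hF : ∀ f : Fin d → CP n,
      F (Quotient.mk (SPSetoid (CP n) d) f) = Quotient.mk (SPSetoid (CP (n + 1)) d) (incl ∘ f)) :
    ∀ k : ℕ, k ≤ 2 * n → ∀ x : SP (CP n) d,
      Function.Bijective (HomotopyGroup.inducedMap (Fin k) F x) := by
  intro k hk x
  have hincl' (v : Fin (n + 1) → ℂ) (hv : v ≠ 0) :
      incl (CP.ofVector v) = CP.ofVector (Fin.snoc v 0) := by
    have hv' : (Fin.snoc v 0 : Fin (n + 2) → ℂ) ≠ 0 :=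
      CP.ne_zero_of_init_ne_zero (by rwa [Fin.init_snoc])
    rw [CP.ofVector_of_ne_zero hv, CP.ofVector_of_ne_zero hv', hincl v hv hv']
  have hmap : SP.map incl = F := funext <| Quotient.ind fun f => (hF f).symm
  let r : StrongDeformationRetraction {s | SPAvoids s (lastPoint n)} F :=
    hmap ▸ (CP.hyperplaneRetraction hincl').symmetricProduct d
  have hcompress {D : Type} [TopologicalSpace D] [CompactSpace D] {B : Set D}
      (hD : IsThin D (Fin (n + 1) → ℂ)) (hB : IsClosed B) :
      Compressible {s : SP (CP (n + 1)) d | SPAvoids s (lastPoint n)} B :=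
    compressible_setOf_spAvoids (CP.isOpenEmbedding_vadd_lastPoint n) hD hB
  have hdim : Module.finrank ℝ (Fin (n + 1) → ℂ) = 2 * (n + 1) := by
    simp [Module.finrank_pi_fintype, mul_comm]
  exact ⟨r.inducedMap_injective x <| hcompress
      (isThin_unitInterval_prod_cube (Fin k) (by rw [Fintype.card_fin, hdim]; omega))
      (isClosed_unitInterval_prod_cubeBoundary _),
    r.inducedMap_surjective x <| hcompress
      (isThin_cube (Fin k) (by rw [Fintype.card_fin, hdim]; omega)) (isClosed_cubeBoundary _)⟩
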